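/- Let m̄ > 0 and let U : ℝ² × ℝ → ℝ be a smooth solution of m̄ ∂²_τ U = Δ_X U whose initial data φ = U(·,0), ψ = ∂_τ U(·,0) are smooth and compactly supported with ∇φ, ψ ∈ H⁵(ℝ²). Then there is a constant C depending only on m̄ such that for all ε ∈ (0,1] and all t ∈ ℝ: the ℓ²(ℤ²)-norm of the function j ↦ Δ[U(ε·, εt)](j) − ε² (Δ_X U)(εj, εt) (discrete Laplacian applied to j ↦ U(εj, εt)) is at most 4 C ε³ (‖∇φ‖_{H⁵} + ‖ψ‖_{H⁵}). -/

import Mathlib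

open MeasureTheory

noncomputable section

/-- The discrete Laplacian on `ℤ²`. -/
def dLap (u : ℤ × ℤ → ℝ) (j : ℤ × ℤ) : ℝ :=
  -4 * u j + u (j + (1, 0)) + u (j - (1, 0)) + u (j + (0, 1)) + u (j - (0, 1))

/-- Second partial derivative in the first spatial coordinate. -/
def d2x1 (f : ℝ × ℝ → ℝ) (X : ℝ × ℝ) : ℝ :=
  deriv (fun a => deriv (fun b => f (b, X.2)) a) X.1

/-- Second partial derivative in the second spatial coordinate. -/
def d2x2 (f : ℝ × ℝ → ℝ) (X : ℝ × ℝ) : ℝ :=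
  deriv (fun a => deriv (fun b => f (X.1, b)) a) X.2

/-- The continuous Laplacian on `ℝ²`. -/
def cLap (f : ℝ × ℝ → ℝ) (X : ℝ × ℝ) : ℝ := d2x1 f X + d2x2 f X

/-- Sobolev `H^k` norm: `Σ_{n=0}^k ‖ |Dⁿ f| ‖_{L²(ℝ²)}`. -/
def HkNorm (k : ℕ) {E : Type*} [NormedAddCommGroup E] [NormedSpace ℝ E]
    (f : ℝ × ℝ → E) : ℝ :=
  ∑ n ∈ Finset.range (k + 1),
    (∫ X : ℝ × ℝ, ‖iteratedFDeriv ℝ n f X‖ ^ 2) ^ ((1 : ℝ) / 2)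

/-- A lattice point scaled by `ε`. -/
def sc (ε : ℝ) (j : ℤ × ℤ) : ℝ × ℝ := (ε * (j.1 : ℝ), ε * (j.2 : ℝ))

/-!
Taylor's formula with integral remainder writes the error of the second difference in direction `v`
as an average of `∂ᵥ⁴ f` along lattice edges. A one-dimensional trace inequality in the transverse
direction `w` bounds its square by the integral of `|∂ᵥ⁴ f|² + |∂_w ∂ᵥ⁴ f|²` over translates of the
unit square, so summation over `ℤ²` produces integrals over `ℝ²`. For `f = U(ε·, T)` with `ε ≤ 1`,
the derivatives contribute `ε⁸` and the change of variables `ε⁻²`, hence `ε⁶` for the square of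
the error.

The fourth and fifth derivatives of `U(·, T)` are first derivatives of the wave solutions `∂ᵥ³ U`
and `∂ᵥ⁴ U`, so the energies of these at time `0`, that is the Sobolev norms of `∇φ` and `ψ`,
control them. No decay of `U` in space is assumed: the energy estimate is localised by a smooth
cutoff to a truncated cone, which then exhausts the space.
-/

open Set Filter Topology
open scoped ContDiff RealInnerProductSpace

section DirDeriv

variable {E E' G : Type*} [NormedAddCommGroup E] [NormedSpace ℝ E] [NormedAddCommGroup E']
  [NormedSpace ℝ E'] [NormedAddCommGroup G] [NormedSpace ℝ G]

/-- The directional derivative `∂ᵥ F`, as an operator on functions so that it can be iterated. -/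
def dirDeriv (v : E) (F : E → G) (p : E) : G := fderiv ℝ F p v

variable {F : E → G}

lemma contDiff_dirDeriv (hF : ContDiff ℝ ∞ F) (v : E) : ContDiff ℝ ∞ (dirDeriv v F) :=
  (hF.fderiv_right (m := ∞) le_rfl).clm_apply contDiff_const

lemma contDiff_iterate_dirDeriv (hF : ContDiff ℝ ∞ F) (v : E) (n : ℕ) :
    ContDiff ℝ ∞ ((dirDeriv v)^[n] F) := by
  induction n with
  | zero => exact hF
  | succ n ih => rw [Function.iterate_succ_apply']; exact contDiff_dirDeriv ih v

lemma dirDeriv_comm (hF : ContDiff ℝ ∞ F) (v w : E) :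
    dirDeriv v (dirDeriv w F) = dirDeriv w (dirDeriv v F) := by
  have hd : Differentiable ℝ (fderiv ℝ F) :=
    (hF.fderiv_right (m := ∞) le_rfl).differentiable (by simp)
  have fderiv_fderiv (v w : E) (p : E) :
      dirDeriv v (dirDeriv w F) p = fderiv ℝ (fderiv ℝ F) p v w := by
    change fderiv ℝ (fun q => fderiv ℝ F q w) p v = _
    rw [((hd p).hasFDerivAt.clm_apply (hasFDerivAt_const w p)).fderiv]
    simp
  ext p
  rw [fderiv_fderiv, fderiv_fderiv]
  exact second_derivative_symmetric (fun q => (hF.differentiable (by simp) q).hasFDerivAt)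
    (hd p).hasFDerivAt v w

lemma dirDeriv_iterate_dirDeriv (hF : ContDiff ℝ ∞ F) (v w : E) (n : ℕ) :
    dirDeriv w ((dirDeriv v)^[n] F) = (dirDeriv v)^[n] (dirDeriv w F) := by
  induction n with
  | zero => rfl
  | succ n ih =>
    rw [Function.iterate_succ_apply', Function.iterate_succ_apply',
      dirDeriv_comm (contDiff_iterate_dirDeriv hF v n), ih]

lemma dirDeriv_smul_left (c : ℝ) (v : E) (F : E → G) :
    dirDeriv (c • v) F = c • dirDeriv v F :=
  funext fun p => (fderiv ℝ F p).map_smul c v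

lemma dirDeriv_const_smul (c : ℝ) (v : E) (F : E → G) :
    dirDeriv v (c • F) = c • dirDeriv v F := by
  ext p
  simp only [dirDeriv, fderiv_const_smul_field, Pi.smul_apply, smul_apply]

lemma iterate_dirDeriv_smul_left (c : ℝ) (v : E) (F : E → G) (n : ℕ) :
    (dirDeriv (c • v))^[n] F = c ^ n • (dirDeriv v)^[n] F := by
  induction n with
  | zero => simp
  | succ n ih =>
    rw [Function.iterate_succ_apply', Function.iterate_succ_apply', ih, dirDeriv_const_smul,
      dirDeriv_smul_left, smul_smul, pow_succ]

lemma dirDeriv_sum {ι : Type*} (s : Finset ι) {f : ι → E → G}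
    (hf : ∀ i ∈ s, Differentiable ℝ (f i)) (v p : E) :
    dirDeriv v (fun q => ∑ i ∈ s, f i q) p = ∑ i ∈ s, dirDeriv v (f i) p := by
  simp [dirDeriv, fderiv_fun_sum fun i hi => hf i hi p]

lemma dirDeriv_mul {f g : E → ℝ} (hf : Differentiable ℝ f) (hg : Differentiable ℝ g) (v p : E) :
    dirDeriv v (f * g) p = f p * dirDeriv v g p + g p * dirDeriv v f p := by
  simp [dirDeriv, fderiv_mul (hf p) (hg p)]

lemma dirDeriv_one (u : ℝ → G) : dirDeriv 1 u = deriv u :=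
  funext fun _ => fderiv_apply_one_eq_deriv

lemma dirDeriv_comp {F : E' → G} (hF : Differentiable ℝ F) {A : E → E'} {L : E →L[ℝ] E'}
    (hA : ∀ p, HasFDerivAt A L p) (v : E) :
    dirDeriv v (F ∘ A) = dirDeriv (L v) F ∘ A := by
  ext p
  simp [dirDeriv, ((hF (A p)).hasFDerivAt.comp p (hA p)).fderiv]

lemma iterate_dirDeriv_comp {F : E' → G} (hF : ContDiff ℝ ∞ F) {A : E → E'} {L : E →L[ℝ] E'}
    (hA : ∀ p, HasFDerivAt A L p) (v : E) (n : ℕ) :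
    (dirDeriv v)^[n] (F ∘ A) = (dirDeriv (L v))^[n] F ∘ A := by
  induction n with
  | zero => rfl
  | succ n ih =>
    rw [Function.iterate_succ_apply', Function.iterate_succ_apply', ih,
      dirDeriv_comp ((contDiff_iterate_dirDeriv hF (L v) n).differentiable (by simp)) hA]

lemma dirDeriv_slice_left {F : E × E' → G} (hF : Differentiable ℝ F) (v : E) (Y : E') :
    dirDeriv v (fun X => F (X, Y)) = fun X => dirDeriv (v, 0) F (X, Y) :=
  dirDeriv_comp hF (fun X => hasFDerivAt_prodMk_left X Y) v

lemma iterate_dirDeriv_slice_left {F : E × E' → G} (hF : ContDiff ℝ ∞ F) (v : E) (n : ℕ)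
    (Y : E') :
    (dirDeriv v)^[n] (fun X => F (X, Y)) = fun X => (dirDeriv (v, 0))^[n] F (X, Y) :=
  iterate_dirDeriv_comp hF (fun X => hasFDerivAt_prodMk_left X Y) v n

lemma iterate_dirDeriv_slice_right {F : E × E' → G} (hF : ContDiff ℝ ∞ F) (w : E') (n : ℕ)
    (X : E) :
    (dirDeriv w)^[n] (fun Y => F (X, Y)) = fun Y => (dirDeriv (0, w))^[n] F (X, Y) :=
  iterate_dirDeriv_comp hF (fun Y => hasFDerivAt_prodMk_right X Y) w n

lemma iteratedDeriv_slice_left {F : ℝ × E' → G} (hF : ContDiff ℝ ∞ F) (n : ℕ) (Y : E') :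
    iteratedDeriv n (fun s => F (s, Y)) = fun s => (dirDeriv (1, 0))^[n] F (s, Y) := by
  rw [iteratedDeriv_eq_iterate, ← funext dirDeriv_one, iterate_dirDeriv_slice_left hF]

lemma iteratedDeriv_slice_right {F : E × ℝ → G} (hF : ContDiff ℝ ∞ F) (n : ℕ) (X : E) :
    iteratedDeriv n (fun s => F (X, s)) = fun s => (dirDeriv (0, 1))^[n] F (X, s) := by
  rw [iteratedDeriv_eq_iterate, ← funext dirDeriv_one, iterate_dirDeriv_slice_right hF]

lemma hasDerivAt_slice_right {F : E × ℝ → G} (hF : ContDiff ℝ ∞ F) (X : E) (τ : ℝ) :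
    HasDerivAt (fun s => F (X, s)) (dirDeriv (0, 1) F (X, τ)) τ := by
  have hd : Differentiable ℝ fun s => F (X, s) :=
    (hF.differentiable (by simp)).comp (by fun_prop)
  simpa [← iteratedDeriv_one, iteratedDeriv_slice_right hF 1] using (hd τ).hasDerivAt

lemma iterate_dirDeriv_eq_iteratedFDeriv (hF : ContDiff ℝ ∞ F) (v : E) (n : ℕ) (p : E) :
    (dirDeriv v)^[n] F p = iteratedFDeriv ℝ n F p fun _ => v := by
  induction n generalizing p with
  | zero => simp
  | succ n ih =>
    have hd : DifferentiableAt ℝ (iteratedFDeriv ℝ n F) p :=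
      (hF.differentiable_iteratedFDeriv (m := n) (by exact_mod_cast ENat.natCast_lt_top n)) p
    rw [Function.iterate_succ_apply', funext ih, hd.iteratedFDeriv_succ_apply_left']
    rfl

lemma norm_iterate_dirDeriv_le (hF : ContDiff ℝ ∞ F) {v : E} (hv : ‖v‖ ≤ 1) (n : ℕ) (p : E) :
    ‖(dirDeriv v)^[n] F p‖ ≤ ‖iteratedFDeriv ℝ n F p‖ := by
  rw [iterate_dirDeriv_eq_iteratedFDeriv hF]
  exact (iteratedFDeriv ℝ n F p).unit_le_opNorm
    ((pi_norm_le_iff_of_nonneg zero_le_one).2 fun _ => hv)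

lemma norm_dirDeriv_iterate_dirDeriv_le (hF : ContDiff ℝ ∞ F) {v w : E} (hv : ‖v‖ ≤ 1)
    (hw : ‖w‖ ≤ 1) (n : ℕ) (p : E) :
    ‖dirDeriv w ((dirDeriv v)^[n] F) p‖ ≤ ‖iteratedFDeriv ℝ n (fderiv ℝ F) p‖ := by
  have hF' : ContDiff ℝ ∞ (fderiv ℝ F) := hF.fderiv_right le_rfl
  calc ‖dirDeriv w ((dirDeriv v)^[n] F) p‖
      = ‖(dirDeriv v)^[n] (dirDeriv w F) p‖ := by rw [dirDeriv_iterate_dirDeriv hF]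
    _ ≤ ‖iteratedFDeriv ℝ n (dirDeriv w F) p‖ :=
        norm_iterate_dirDeriv_le (contDiff_dirDeriv hF w) hv n p
    _ ≤ ‖w‖ * ‖iteratedFDeriv ℝ n (fderiv ℝ F) p‖ :=
        norm_iteratedFDeriv_clm_apply_const hF'.contDiffAt (by exact_mod_cast le_top)
    _ ≤ ‖iteratedFDeriv ℝ n (fderiv ℝ F) p‖ := mul_le_of_le_one_left (norm_nonneg _) hw

end DirDeriv

section WaveEquation

variable {E ι : Type*} [NormedAddCommGroup E] [NormedSpace ℝ E] [Fintype ι]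
  {m : ℝ} {b : ι → E} {F : E × ℝ → ℝ}

/-- Smooth solutions `F (X, τ)` of the constant-coefficient wave equation
`m ∂²_τ F = Σᵢ ∂²_{b i} F`; for an orthonormal basis `b` this is `m ∂²_τ F = Δ_X F`. -/
structure IsWaveSolution (m : ℝ) (b : ι → E) (F : E × ℝ → ℝ) : Prop where
  contDiff : ContDiff ℝ ∞ F
  wave_eq : ∀ p, m * dirDeriv (0, 1) (dirDeriv (0, 1) F) p =
    ∑ i, dirDeriv (b i, 0) (dirDeriv (b i, 0) F) p

/-- The energy density `m (∂_τ F)² + Σᵢ (∂_{b i} F)²` of the wave equation. -/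
def energyDensity (m : ℝ) (b : ι → E) (F : E × ℝ → ℝ) (p : E × ℝ) : ℝ :=
  m * dirDeriv (0, 1) F p ^ 2 + ∑ i, dirDeriv (b i, 0) F p ^ 2

/-- The reflection `(X, τ) ↦ (X, -τ)`. -/
def timeReversal (E : Type*) [NormedAddCommGroup E] [NormedSpace ℝ E] : E × ℝ →L[ℝ] E × ℝ :=
  (ContinuousLinearMap.id ℝ E).prodMap (-ContinuousLinearMap.id ℝ ℝ)

lemma isWaveSolution_dirDeriv (h : IsWaveSolution m b F) (v : E × ℝ) :
    IsWaveSolution m b (dirDeriv v F) where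
  contDiff := contDiff_dirDeriv h.contDiff v
  wave_eq p := by
    have second_comm (u : E × ℝ) :
        dirDeriv u (dirDeriv u (dirDeriv v F)) = dirDeriv v (dirDeriv u (dirDeriv u F)) := by
      rw [dirDeriv_comm h.contDiff, dirDeriv_comm (contDiff_dirDeriv h.contDiff u)]
    have wave_eq : m • dirDeriv (0, 1) (dirDeriv (0, 1) F) =
        fun q => ∑ i, dirDeriv (b i, 0) (dirDeriv (b i, 0) F) q := funext h.wave_eq
    have hdiff (i : ι) : Differentiable ℝ (dirDeriv (b i, 0) (dirDeriv (b i, 0) F)) :=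
      (contDiff_dirDeriv (contDiff_dirDeriv h.contDiff _) _).differentiable (by simp)
    simp only [second_comm]
    rw [← dirDeriv_sum _ fun i _ => hdiff i, ← wave_eq, dirDeriv_const_smul]
    rfl

lemma isWaveSolution_iterate_dirDeriv (h : IsWaveSolution m b F) (v : E × ℝ) (n : ℕ) :
    IsWaveSolution m b ((dirDeriv v)^[n] F) := by
  induction n with
  | zero => exact h
  | succ n ih => rw [Function.iterate_succ_apply']; exact isWaveSolution_dirDeriv ih v

lemma dirDeriv_space_comp_timeReversal (hF : Differentiable ℝ F) (v : E) :
    dirDeriv (v, 0) (F ∘ timeReversal E) = dirDeriv (v, 0) F ∘ timeReversal E := by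
  rw [dirDeriv_comp hF fun _ => (timeReversal E).hasFDerivAt]
  simp [timeReversal]

lemma dirDeriv_time_comp_timeReversal (hF : Differentiable ℝ F) :
    dirDeriv (0, 1) (F ∘ timeReversal E) = (-1 : ℝ) • (dirDeriv (0, 1) F ∘ timeReversal E) := by
  have htime : timeReversal E (0, 1) = (-1 : ℝ) • (0, 1) := by simp [timeReversal]
  rw [dirDeriv_comp hF fun _ => (timeReversal E).hasFDerivAt, htime, dirDeriv_smul_left]
  rfl

lemma isWaveSolution_comp_timeReversal (h : IsWaveSolution m b F) :
    IsWaveSolution m b (F ∘ timeReversal E) where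
  contDiff := h.contDiff.comp (timeReversal E).contDiff
  wave_eq p := by
    have hd (v : E × ℝ) : Differentiable ℝ (dirDeriv v F) :=
      (contDiff_dirDeriv h.contDiff v).differentiable (by simp)
    have hd₀ := h.contDiff.differentiable (by simp)
    simp only [dirDeriv_space_comp_timeReversal hd₀, dirDeriv_time_comp_timeReversal hd₀,
      dirDeriv_const_smul, dirDeriv_space_comp_timeReversal (hd _),
      dirDeriv_time_comp_timeReversal (hd _), smul_smul]
    simpa using h.wave_eq (timeReversal E p)

lemma energyDensity_comp_timeReversal (hF : Differentiable ℝ F) :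
    energyDensity m b (F ∘ timeReversal E) = energyDensity m b F ∘ timeReversal E := by
  ext p
  simp [energyDensity, dirDeriv_space_comp_timeReversal hF, dirDeriv_time_comp_timeReversal hF]

lemma energyDensity_nonneg (hm : 0 ≤ m) (b : ι → E) (F : E × ℝ → ℝ) (p : E × ℝ) :
    0 ≤ energyDensity m b F p := by
  unfold energyDensity; positivity

lemma sq_dirDeriv_le_energyDensity (hm : 0 ≤ m) (b : ι → E) (F : E × ℝ → ℝ) (p : E × ℝ) (i : ι) :
    dirDeriv (b i, 0) F p ^ 2 ≤ energyDensity m b F p := by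
  have hsum := Finset.single_le_sum (f := fun i => dirDeriv (b i, 0) F p ^ 2)
    (fun i _ => sq_nonneg _) (Finset.mem_univ i)
  have htime : 0 ≤ m * dirDeriv (0, 1) F p ^ 2 := by positivity
  rw [energyDensity]
  linarith

lemma contDiff_energyDensity (hF : ContDiff ℝ ∞ F) : ContDiff ℝ ∞ (energyDensity m b F) := by
  have (v : E × ℝ) := contDiff_dirDeriv hF v
  unfold energyDensity
  fun_prop

lemma dirDeriv_time_energyDensity (hF : ContDiff ℝ ∞ F) (p : E × ℝ) :
    dirDeriv (0, 1) (energyDensity m b F) p =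
      2 * (dirDeriv (0, 1) F p * (m * dirDeriv (0, 1) (dirDeriv (0, 1) F) p)) +
        ∑ i, 2 * (dirDeriv (b i, 0) F p * dirDeriv (0, 1) (dirDeriv (b i, 0) F) p) := by
  obtain ⟨X, τ⟩ := p
  have hsq (v : E × ℝ) := (hasDerivAt_slice_right (contDiff_dirDeriv hF v) X τ).pow 2
  have hderiv := ((hsq (0, 1)).const_mul m).fun_add
    (HasDerivAt.fun_sum fun i (_ : i ∈ Finset.univ) => hsq (b i, 0))
  rw [(hasDerivAt_slice_right (contDiff_energyDensity hF) X τ).unique hderiv]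
  simp only [Nat.cast_ofNat, Nat.add_one_sub_one, pow_one, mul_assoc]
  ring

lemma dirDeriv_time_energyDensity_eq_divergence (h : IsWaveSolution m b F) (p : E × ℝ) :
    dirDeriv (0, 1) (energyDensity m b F) p =
      ∑ i, 2 * dirDeriv (b i, 0) (dirDeriv (0, 1) F * dirDeriv (b i, 0) F) p := by
  have hd (v : E × ℝ) : Differentiable ℝ (dirDeriv v F) :=
    (contDiff_dirDeriv h.contDiff v).differentiable (by simp)
  rw [dirDeriv_time_energyDensity h.contDiff, h.wave_eq, Finset.mul_sum, Finset.mul_sum,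
    ← Finset.sum_add_distrib]
  refine Finset.sum_congr rfl fun i _ => ?_
  rw [dirDeriv_mul (hd _) (hd _), dirDeriv_comm h.contDiff (0, 1)]
  ring

end WaveEquation

section Integration

variable {E : Type*} [NormedAddCommGroup E] [MeasurableSpace E] [BorelSpace E] {μ : Measure E}

lemma integrableOn_slice [IsFiniteMeasureOnCompacts μ] {f : E × ℝ → ℝ} (hf : Continuous f)
    {K : Set E} (hK : IsCompact K) (τ : ℝ) : IntegrableOn (fun X => f (X, τ)) K μ :=
  (hf.comp (by fun_prop)).continuousOn.integrableOn_compact hK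

variable [NormedSpace ℝ E]

lemma hasDerivAt_setIntegral_slice [IsFiniteMeasureOnCompacts μ] {G : E × ℝ → ℝ}
    (hG : ContDiff ℝ ∞ G) {K : Set E} (hK : IsCompact K) (τ : ℝ) :
    HasDerivAt (fun s => ∫ X in K, G (X, s) ∂μ) (∫ X in K, dirDeriv (0, 1) G (X, τ) ∂μ) τ := by
  have hG' : Continuous (dirDeriv (0, 1) G) := (contDiff_dirDeriv hG _).continuous
  obtain ⟨C, hC⟩ :=
    (hK.prod (isCompact_closedBall τ 1)).exists_bound_of_continuousOn hG'.continuousOn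
  refine (hasDerivAt_integral_of_dominated_loc_of_deriv_le (bound := fun _ => C)
    (F' := fun s X => dirDeriv (0, 1) G (X, s)) (Metric.closedBall_mem_nhds τ one_pos)
    (.of_forall fun s => (integrableOn_slice hG.continuous hK s).aestronglyMeasurable)
    (integrableOn_slice hG.continuous hK τ)
    (integrableOn_slice hG' hK τ).aestronglyMeasurable ?_ (integrableOn_const hK.measure_ne_top)
    (.of_forall fun X s _ => hasDerivAt_slice_right hG X s)).2
  exact (ae_restrict_iff' hK.measurableSet).2 (.of_forall fun X hX s hs => hC (X, s) ⟨hX, hs⟩)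

lemma setIntegral_dirDeriv_eq_zero [FiniteDimensional ℝ E] [μ.IsAddHaarMeasure]
    {g : E → ℝ} (hg : ContDiff ℝ ∞ g) {K : Set E} (hK : IsCompact K) (hgK : ∀ X ∉ K, g X = 0)
    (v : E) : ∫ X in K, dirDeriv v g X ∂μ = 0 := by
  have hcompact : HasCompactSupport g := .intro hK hgK
  have hsupport : tsupport g ⊆ K :=
    closure_minimal (fun X hX => not_imp_comm.1 (hgK X) hX) hK.isClosed
  have hzero (X : E) (hX : X ∉ K) : dirDeriv v g X = 0 := by
    simp [dirDeriv, image_eq_zero_of_notMem_tsupport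
      fun h => hX (hsupport (tsupport_fderiv_subset ℝ h))]
  have hint : Integrable (dirDeriv v g) μ :=
    (contDiff_dirDeriv hg v).continuous.integrable_of_hasCompactSupport (.intro hK hzero)
  rw [setIntegral_eq_integral_of_forall_compl_eq_zero hzero]
  simpa [dirDeriv] using integral_mul_fderiv_eq_neg_fderiv_mul_of_integrable (μ := μ)
    (f := fun _ : E => (1 : ℝ)) (g := g) (v := v) (by simp)
    (by simp only [one_mul]; exact hint)
    (by simpa using hg.continuous.integrable_of_hasCompactSupport hcompact)
    (by fun_prop) (fun X _ => hg.differentiable (by simp) X)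

end Integration

section EnergyEstimate

variable {E ι : Type*} [NormedAddCommGroup E] [NormedSpace ℝ E] [FiniteDimensional ℝ E]

/-- The Japanese bracket `√(1 + |X|²)`, a smooth substitute for the Euclidean norm `|X|`. -/
def bracket (X : E) : ℝ := √(1 + ‖toEuclidean X‖ ^ 2)

/-- The compact sublevel sets of `bracket`, which exhaust the space. -/
def bracketBall (E : Type*) [NormedAddCommGroup E] [NormedSpace ℝ E] [FiniteDimensional ℝ E]
    (R : ℝ) : Set E := {X | bracket X ≤ R}

/-- A smooth weight which is `1` well inside and `0` outside the truncated cone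
`bracket X ≤ R - k τ`, whose lateral boundary moves inwards with speed `k`. -/
def coneCutoff (k R : ℝ) (p : E × ℝ) : ℝ :=
  Real.smoothTransition (R - k * p.2 - bracket p.1)

lemma contDiff_bracket : ContDiff ℝ ∞ (bracket : E → ℝ) :=
  ContDiff.sqrt (contDiff_const.add ((toEuclidean : E ≃L[ℝ] _).contDiff.norm_sq ℝ))
    fun X => by positivity

lemma norm_toEuclidean_le_bracket (X : E) : ‖toEuclidean X‖ ≤ bracket X :=
  Real.le_sqrt_of_sq_le (by linarith)

lemma isCompact_bracketBall (R : ℝ) : IsCompact (bracketBall E R) := by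
  have hclosed : IsClosed (bracketBall E R) :=
    isClosed_le contDiff_bracket.continuous continuous_const
  have hball : IsCompact (toEuclidean ⁻¹' Metric.closedBall 0 R : Set E) :=
    toEuclidean.toHomeomorph.isCompact_preimage.2 (isCompact_closedBall _ _)
  exact hball.of_isClosed_subset hclosed fun X hX => by
    simpa using (norm_toEuclidean_le_bracket X).trans hX

lemma sq_dirDeriv_bracket_le (v X : E) : dirDeriv v bracket X ^ 2 ≤ ‖toEuclidean v‖ ^ 2 := by
  have hpos : 0 < bracket X := Real.sqrt_pos.2 (by positivity)
  have hformula : dirDeriv v bracket X = ⟪toEuclidean X, toEuclidean v⟫ / bracket X := by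
    have hd := (((toEuclidean : E ≃L[ℝ] _).hasFDerivAt (x := X)).norm_sq.const_add 1).sqrt
      (by positivity)
    rw [dirDeriv, show fderiv ℝ bracket X = _ from hd.fderiv]
    simp only [one_div, mul_inv_rev, smul_apply, ContinuousLinearMap.comp_apply,
      ContinuousLinearEquiv.coe_coe, coe_innerSL_apply, nsmul_eq_mul, Nat.cast_ofNat,
      smul_eq_mul, bracket]
    field_simp
  rw [hformula, ← sq_abs, abs_div, abs_of_pos hpos]
  gcongr
  rw [div_le_iff₀ hpos, mul_comm]
  exact (abs_real_inner_le_norm _ _).trans (by gcongr; exact norm_toEuclidean_le_bracket X)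

lemma contDiff_coneCutoff (k R : ℝ) : ContDiff ℝ ∞ (coneCutoff k R : E × ℝ → ℝ) :=
  Real.smoothTransition.contDiff.comp <|
    (contDiff_const.sub (contDiff_const.mul contDiff_snd)).sub (contDiff_bracket.comp contDiff_fst)

lemma dirDeriv_coneCutoff (k R : ℝ) (v : E) (s : ℝ) (p : E × ℝ) :
    dirDeriv (v, s) (coneCutoff k R) p = -(k * s + dirDeriv v bracket p.1) *
      deriv Real.smoothTransition (R - k * p.2 - bracket p.1) := by
  have hbracket := (contDiff_bracket.differentiable (by simp) p.1).hasFDerivAt.comp p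
    hasFDerivAt_fst
  have htransition := (Real.smoothTransition.contDiff.differentiable (n := 1) (by simp)
    (R - k * p.2 - bracket p.1)).hasDerivAt
  have hd := htransition.comp_hasFDerivAt p ((hasFDerivAt_snd.const_mul k).const_sub R |>.sub
    hbracket)
  rw [dirDeriv, show fderiv ℝ (coneCutoff k R) p = _ from hd.fderiv]
  simp only [smul_apply, sub_apply, neg_apply, ContinuousLinearMap.coe_snd', smul_eq_mul,
    ContinuousLinearMap.comp_apply, ContinuousLinearMap.coe_fst', dirDeriv, neg_add_rev]
  ring

lemma coneCutoff_eq_zero {k R : ℝ} (hk : 0 ≤ k) {X : E} (hX : X ∉ bracketBall E R) {τ : ℝ}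
    (hτ : 0 ≤ τ) : coneCutoff k R (X, τ) = 0 :=
  Real.smoothTransition.zero_of_nonpos <| by
    linarith [mul_nonneg hk hτ, not_le.1 (show ¬bracket X ≤ R from hX)]

variable [Fintype ι] {m k : ℝ} {b : ι → E} {F : E × ℝ → ℝ}

lemma sum_flux_mul_dirDeriv_bracket_le (hk : 1 ≤ k)
    (hkm : ∑ i, ‖toEuclidean (b i)‖ ^ 2 ≤ k * m) (p : E × ℝ) :
    ∑ i, 2 * (dirDeriv (0, 1) F p * dirDeriv (b i, 0) F p * dirDeriv (b i) bracket p.1) ≤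
      k * energyDensity m b F p := by
  calc ∑ i, 2 * (dirDeriv (0, 1) F p * dirDeriv (b i, 0) F p * dirDeriv (b i) bracket p.1)
      ≤ ∑ i, (‖toEuclidean (b i)‖ ^ 2 * dirDeriv (0, 1) F p ^ 2 + dirDeriv (b i, 0) F p ^ 2) := by
        gcongr with i
        nlinarith [sq_nonneg (dirDeriv (b i) bracket p.1 * dirDeriv (0, 1) F p -
          dirDeriv (b i, 0) F p), mul_le_mul_of_nonneg_right
          (sq_dirDeriv_bracket_le (b i) p.1) (sq_nonneg (dirDeriv (0, 1) F p))]
    _ = (∑ i, ‖toEuclidean (b i)‖ ^ 2) * dirDeriv (0, 1) F p ^ 2 +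
          1 * ∑ i, dirDeriv (b i, 0) F p ^ 2 := by
        rw [Finset.sum_add_distrib, Finset.sum_mul, one_mul]
    _ ≤ (k * m) * dirDeriv (0, 1) F p ^ 2 + k * ∑ i, dirDeriv (b i, 0) F p ^ 2 := by gcongr
    _ = k * energyDensity m b F p := by rw [energyDensity]; ring

/-- Where the weight varies, it decreases in time fast enough to absorb the energy flux. -/
lemma dirDeriv_time_coneCutoff_mul_energyDensity_le (h : IsWaveSolution m b F) (hk : 1 ≤ k)
    (hkm : ∑ i, ‖toEuclidean (b i)‖ ^ 2 ≤ k * m) (R : ℝ) (p : E × ℝ) :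
    dirDeriv (0, 1) (coneCutoff k R * energyDensity m b F) p ≤
      ∑ i, 2 * dirDeriv (b i, 0)
        (coneCutoff k R * (dirDeriv (0, 1) F * dirDeriv (b i, 0) F)) p := by
  have hd {f : E × ℝ → ℝ} (hf : ContDiff ℝ ∞ f) : Differentiable ℝ f := hf.differentiable (by simp)
  have hw := hd (contDiff_coneCutoff (E := E) k R)
  have hs (v : E × ℝ) := hd (contDiff_dirDeriv h.contDiff v)
  have hflux (i : ι) : Differentiable ℝ (dirDeriv (0, 1) F * dirDeriv (b i, 0) F) :=
    (hs _).mul (hs _)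
  set w := coneCutoff k R p
  set χ' := deriv Real.smoothTransition (R - k * p.2 - bracket p.1)
  have hχ'_nonneg : 0 ≤ χ' := Real.smoothTransition.monotone.deriv_nonneg
  have hbracket_zero : dirDeriv 0 bracket p.1 = 0 := map_zero (fderiv ℝ (bracket : E → ℝ) p.1)
  calc dirDeriv (0, 1) (coneCutoff k R * energyDensity m b F) p
      = w * ∑ i, 2 * dirDeriv (b i, 0) (dirDeriv (0, 1) F * dirDeriv (b i, 0) F) p -
          χ' * (k * energyDensity m b F p) := by
        rw [dirDeriv_mul hw (hd (contDiff_energyDensity h.contDiff)),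
          dirDeriv_time_energyDensity_eq_divergence h, dirDeriv_coneCutoff, hbracket_zero]
        ring
    _ ≤ w * ∑ i, 2 * dirDeriv (b i, 0) (dirDeriv (0, 1) F * dirDeriv (b i, 0) F) p -
          χ' * ∑ i, 2 * (dirDeriv (0, 1) F p * dirDeriv (b i, 0) F p *
            dirDeriv (b i) bracket p.1) := by
        gcongr
        exact sum_flux_mul_dirDeriv_bracket_le hk hkm p
    _ = _ := by
        rw [Finset.mul_sum, Finset.mul_sum, ← Finset.sum_sub_distrib]
        refine Finset.sum_congr rfl fun i _ => ?_
        rw [dirDeriv_mul hw (hflux i), dirDeriv_coneCutoff, Pi.mul_apply]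
        ring

variable [MeasurableSpace E] [BorelSpace E] {μ : Measure E}

lemma aecover_bracketBall : AECover μ atTop fun r : ℝ => bracketBall E r where
  ae_eventually_mem := .of_forall fun X => eventually_ge_atTop (bracket X)
  measurableSet r := (isCompact_bracketBall r).measurableSet

variable [μ.IsAddHaarMeasure]

lemma setIntegral_dirDeriv_time_coneCutoff_mul_energyDensity_nonpos (h : IsWaveSolution m b F)
    (hk : 1 ≤ k) (hkm : ∑ i, ‖toEuclidean (b i)‖ ^ 2 ≤ k * m) (R : ℝ) {τ : ℝ} (hτ : 0 ≤ τ) :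
    ∫ X in bracketBall E R, dirDeriv (0, 1) (coneCutoff k R * energyDensity m b F) (X, τ) ∂μ ≤
      0 := by
  have hK : IsCompact (bracketBall E R) := isCompact_bracketBall R
  have hw := contDiff_coneCutoff (E := E) k R
  have hs (v : E × ℝ) := contDiff_dirDeriv h.contDiff v
  set flux : ι → E × ℝ → ℝ := fun i =>
    coneCutoff k R * (dirDeriv (0, 1) F * dirDeriv (b i, 0) F) with hflux
  have contDiff_flux (i : ι) : ContDiff ℝ ∞ (flux i) := hw.mul ((hs _).mul (hs _))
  have integrable_dirDeriv {f : E × ℝ → ℝ} (hf : ContDiff ℝ ∞ f) (v : E × ℝ) :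
      IntegrableOn (fun X => dirDeriv v f (X, τ)) (bracketBall E R) μ :=
    integrableOn_slice (contDiff_dirDeriv hf v).continuous hK τ
  have integral_flux (i : ι) :
      ∫ X in bracketBall E R, dirDeriv (b i, 0) (flux i) (X, τ) ∂μ = 0 := by
    have hzero (X : E) (hX : X ∉ bracketBall E R) : flux i (X, τ) = 0 := by
      simp [hflux, coneCutoff_eq_zero (zero_le_one.trans hk) hX hτ]
    rw [← dirDeriv_slice_left ((contDiff_flux i).differentiable (by simp))]
    exact setIntegral_dirDeriv_eq_zero
      ((contDiff_flux i).comp (by fun_prop : ContDiff ℝ ∞ fun X => (X, τ))) hK hzero (b i)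
  calc _ ≤ ∫ X in bracketBall E R, ∑ i, 2 * dirDeriv (b i, 0) (flux i) (X, τ) ∂μ :=
        integral_mono (integrable_dirDeriv (hw.mul (contDiff_energyDensity h.contDiff)) _)
          (integrable_finsetSum _ fun i _ => (integrable_dirDeriv (contDiff_flux i) _).const_mul 2)
          fun X => dirDeriv_time_coneCutoff_mul_energyDensity_le h hk hkm R (X, τ)
    _ = 0 := by
        rw [integral_finsetSum _ fun i _ => (integrable_dirDeriv (contDiff_flux i) _).const_mul 2]
        simp only [integral_const_mul, integral_flux, mul_zero, Finset.sum_const_zero]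

lemma antitoneOn_setIntegral_coneCutoff_mul_energyDensity (h : IsWaveSolution m b F)
    (hk : 1 ≤ k) (hkm : ∑ i, ‖toEuclidean (b i)‖ ^ 2 ≤ k * m) (R : ℝ) :
    AntitoneOn (fun τ => ∫ X in bracketBall E R,
      coneCutoff k R (X, τ) * energyDensity m b F (X, τ) ∂μ) (Ici 0) := by
  have hderiv := hasDerivAt_setIntegral_slice (μ := μ)
    ((contDiff_coneCutoff k R).mul (contDiff_energyDensity (m := m) (b := b) h.contDiff))
    (isCompact_bracketBall R)
  refine antitoneOn_of_deriv_nonpos (convex_Ici 0)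
    (fun τ _ => (hderiv τ).continuousAt.continuousWithinAt)
    (fun τ _ => (hderiv τ).differentiableAt.differentiableWithinAt) fun τ hτ => ?_
  rw [interior_Ici] at hτ
  exact (hderiv τ).deriv.trans_le
    (setIntegral_dirDeriv_time_coneCutoff_mul_energyDensity_nonpos h hk hkm R (le_of_lt hτ))

lemma setIntegral_energyDensity_le (hm : 0 < m) (h : IsWaveSolution m b F)
    (hint : Integrable (fun X => energyDensity m b F (X, 0)) μ) {T : ℝ} (hT : 0 ≤ T) (r : ℝ) :
    ∫ X in bracketBall E r, energyDensity m b F (X, T) ∂μ ≤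
      ∫ X, energyDensity m b F (X, 0) ∂μ := by
  obtain ⟨k, hk, hkm⟩ : ∃ k, 1 ≤ k ∧ ∑ i, ‖toEuclidean (b i)‖ ^ 2 ≤ k * m :=
    ⟨1 + (∑ i, ‖toEuclidean (b i)‖ ^ 2) / m, le_add_of_nonneg_right (by positivity), by
      rw [add_mul, div_mul_cancel₀ _ hm.ne']; linarith⟩
  set e := energyDensity m b F
  set R := r + k * T + 1
  have he : ∀ p, 0 ≤ e p := energyDensity_nonneg hm.le b F
  have hweighted (τ : ℝ) :
      IntegrableOn (fun X => coneCutoff k R (X, τ) * e (X, τ)) (bracketBall E R) μ :=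
    integrableOn_slice
      ((contDiff_coneCutoff k R).mul (contDiff_energyDensity h.contDiff)).continuous
      (isCompact_bracketBall R) τ
  have hrR : r ≤ R := by linarith [mul_nonneg (zero_le_one.trans hk) hT]
  have hsubset : bracketBall E r ⊆ bracketBall E R := fun X (hX : bracket X ≤ r) => hX.trans hrR
  calc ∫ X in bracketBall E r, e (X, T) ∂μ
      = ∫ X in bracketBall E r, coneCutoff k R (X, T) * e (X, T) ∂μ := by
        refine setIntegral_congr_fun (isCompact_bracketBall r).measurableSet fun X hX => ?_
        have hone : coneCutoff k R (X, T) = 1 :=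
          Real.smoothTransition.one_of_one_le (x := R - k * T - bracket X) <| by
            linarith [show bracket X ≤ r from hX]
        simp [hone]
    _ ≤ ∫ X in bracketBall E R, coneCutoff k R (X, T) * e (X, T) ∂μ :=
        setIntegral_mono_set (hweighted T)
          (.of_forall fun X => mul_nonneg (Real.smoothTransition.nonneg _) (he _))
          hsubset.eventuallyLE
    _ ≤ ∫ X in bracketBall E R, coneCutoff k R (X, 0) * e (X, 0) ∂μ :=
        antitoneOn_setIntegral_coneCutoff_mul_energyDensity h hk hkm R self_mem_Ici hT hT
    _ ≤ ∫ X in bracketBall E R, e (X, 0) ∂μ :=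
        setIntegral_mono (hweighted 0) hint.integrableOn fun X =>
          mul_le_of_le_one_left (he _) (Real.smoothTransition.le_one _)
    _ ≤ ∫ X, e (X, 0) ∂μ := setIntegral_le_integral hint (.of_forall fun X => he _)

lemma integral_energyDensity_le_of_nonneg (hm : 0 < m) (h : IsWaveSolution m b F)
    (hint : Integrable (fun X => energyDensity m b F (X, 0)) μ) {T : ℝ} (hT : 0 ≤ T) :
    Integrable (fun X => energyDensity m b F (X, T)) μ ∧
      ∫ X, energyDensity m b F (X, T) ∂μ ≤ ∫ X, energyDensity m b F (X, 0) ∂μ := by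
  have hlocal := setIntegral_energyDensity_le hm h hint hT
  have hintT : Integrable (fun X => energyDensity m b F (X, T)) μ :=
    aecover_bracketBall.integrable_of_integral_bounded_of_nonneg_ae _
      (fun r => integrableOn_slice (contDiff_energyDensity h.contDiff).continuous
        (isCompact_bracketBall r) T)
      (.of_forall fun X => energyDensity_nonneg hm.le b F _) (.of_forall hlocal)
  exact ⟨hintT, le_of_tendsto' (aecover_bracketBall.integral_tendsto_of_countably_generated hintT)
    hlocal⟩

theorem integral_energyDensity_le (hm : 0 < m) (h : IsWaveSolution m b F)
    (hint : Integrable (fun X => energyDensity m b F (X, 0)) μ) (T : ℝ) :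
    Integrable (fun X => energyDensity m b F (X, T)) μ ∧
      ∫ X, energyDensity m b F (X, T) ∂μ ≤ ∫ X, energyDensity m b F (X, 0) ∂μ := by
  rcases le_total 0 T with hT | hT
  · exact integral_energyDensity_le_of_nonneg hm h hint hT
  · have hreverse (X : E) (τ : ℝ) :
        energyDensity m b (F ∘ timeReversal E) (X, τ) = energyDensity m b F (X, -τ) := by
      rw [energyDensity_comp_timeReversal (h.contDiff.differentiable (by simp))]
      rfl
    simpa [hreverse] using integral_energyDensity_le_of_nonneg (μ := μ) hm
      (isWaveSolution_comp_timeReversal h) (by simpa [hreverse] using hint) (neg_nonneg.2 hT)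

end EnergyEstimate

section SobolevData

variable {G : Type*} [NormedAddCommGroup G] [NormedSpace ℝ G]

/-- Membership in the Sobolev space `H^k(ℝ²)`, for functions that are classically smooth. -/
def MemHk (k : ℕ) (f : ℝ × ℝ → G) : Prop := ∀ n ≤ k, MemLp (iteratedFDeriv ℝ n f) 2

lemma memHk_of_hasCompactSupport {f : ℝ × ℝ → G} (hf : ContDiff ℝ ∞ f)
    (hc : HasCompactSupport f) (k : ℕ) : MemHk k f := fun n _ =>
  (hf.continuous_iteratedFDeriv (by exact_mod_cast le_top)).memLp_of_hasCompactSupport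
    (hc.iteratedFDeriv n)

lemma hkNorm_nonneg (k : ℕ) (f : ℝ × ℝ → G) : 0 ≤ HkNorm k f := by
  unfold HkNorm; positivity

lemma integral_sq_norm_iteratedFDeriv_le (f : ℝ × ℝ → G) {n k : ℕ} (hn : n ≤ k) :
    ∫ X, ‖iteratedFDeriv ℝ n f X‖ ^ 2 ≤ HkNorm k f ^ 2 := by
  have hnonneg (i : ℕ) : 0 ≤ ∫ X, ‖iteratedFDeriv ℝ i f X‖ ^ 2 :=
    integral_nonneg fun X => by positivity
  rw [← Real.sqrt_le_left (hkNorm_nonneg k f), Real.sqrt_eq_rpow]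
  exact Finset.single_le_sum (f := fun i => (∫ X, ‖iteratedFDeriv ℝ i f X‖ ^ 2) ^ ((1 : ℝ) / 2))
    (fun i _ => Real.rpow_nonneg (hnonneg i) _) (Finset.mem_range_succ_iff.2 hn)

variable {ι : Type*} [Fintype ι] {m : ℝ} {b : ι → ℝ × ℝ} {F : (ℝ × ℝ) × ℝ → ℝ}

lemma energyDensity_iterate_zero_le (hm : 0 ≤ m) (hb : ∀ i, ‖b i‖ ≤ 1) (hF : ContDiff ℝ ∞ F)
    {v : ℝ × ℝ} (hv : ‖v‖ ≤ 1) (n : ℕ) (X : ℝ × ℝ) :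
    energyDensity m b ((dirDeriv (v, 0))^[n] F) (X, 0) ≤
      m * ‖iteratedFDeriv ℝ n (fun Y => dirDeriv (0, 1) F (Y, 0)) X‖ ^ 2 +
        Fintype.card ι * ‖iteratedFDeriv ℝ n (fderiv ℝ fun Y => F (Y, 0)) X‖ ^ 2 := by
  have hslice {f : (ℝ × ℝ) × ℝ → ℝ} (hf : ContDiff ℝ ∞ f) : ContDiff ℝ ∞ fun Y => f (Y, 0) :=
    hf.comp (by fun_prop)
  have hF' := contDiff_dirDeriv hF (0, 1)
  have htime : |dirDeriv (0, 1) ((dirDeriv (v, 0))^[n] F) (X, 0)| ≤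
      ‖iteratedFDeriv ℝ n (fun Y => dirDeriv (0, 1) F (Y, 0)) X‖ := by
    rw [dirDeriv_iterate_dirDeriv hF,
      ← congrFun (iterate_dirDeriv_slice_left hF' v n (0 : ℝ)) X]
    exact norm_iterate_dirDeriv_le (hslice hF') hv n X
  have hspace (i : ι) : |dirDeriv (b i, 0) ((dirDeriv (v, 0))^[n] F) (X, 0)| ≤
      ‖iteratedFDeriv ℝ n (fderiv ℝ fun Y => F (Y, 0)) X‖ := by
    have hd := (contDiff_iterate_dirDeriv hF (v, 0) n).differentiable (by simp)
    rw [← congrFun (dirDeriv_slice_left hd (b i) (0 : ℝ)) X,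
      ← iterate_dirDeriv_slice_left hF v n (0 : ℝ)]
    exact norm_dirDeriv_iterate_dirDeriv_le (hslice hF) hv (hb i) n X
  have sum_space : ∑ i, dirDeriv (b i, 0) ((dirDeriv (v, 0))^[n] F) (X, 0) ^ 2 ≤
      Fintype.card ι * ‖iteratedFDeriv ℝ n (fderiv ℝ fun Y => F (Y, 0)) X‖ ^ 2 := by
    rw [← nsmul_eq_mul]
    refine Finset.sum_le_card_nsmul _ _ _ fun i _ => ?_
    exact sq_le_sq' (abs_le.1 (hspace i)).1 (abs_le.1 (hspace i)).2
  rw [energyDensity]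
  gcongr ?_ + ?_
  · exact mul_le_mul_of_nonneg_left (sq_le_sq' (abs_le.1 htime).1 (abs_le.1 htime).2) hm

lemma integral_energyDensity_iterate_le (hm : 0 < m) (hb : ∀ i, ‖b i‖ ≤ 1)
    (h : IsWaveSolution m b F) {k : ℕ} (hφ : MemHk k (fderiv ℝ fun Y => F (Y, 0)))
    (hψ : MemHk k fun Y => dirDeriv (0, 1) F (Y, 0)) {v : ℝ × ℝ} (hv : ‖v‖ ≤ 1) {n : ℕ}
    (hn : n ≤ k) (T : ℝ) :
    Integrable (fun X => energyDensity m b ((dirDeriv (v, 0))^[n] F) (X, T)) ∧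
      ∫ X, energyDensity m b ((dirDeriv (v, 0))^[n] F) (X, T) ≤
        m * HkNorm k (fun Y => dirDeriv (0, 1) F (Y, 0)) ^ 2 +
          Fintype.card ι * HkNorm k (fderiv ℝ fun Y => F (Y, 0)) ^ 2 := by
  have hn_wave := isWaveSolution_iterate_dirDeriv h (v, 0) n
  have hbound := energyDensity_iterate_zero_le hm.le hb h.contDiff hv n
  have hψ_int := ((hψ n hn).integrable_norm_pow two_ne_zero).const_mul m
  have hφ_int := ((hφ n hn).integrable_norm_pow two_ne_zero).const_mul (Fintype.card ι : ℝ)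
  have hcont : Continuous fun X : ℝ × ℝ =>
      energyDensity m b ((dirDeriv (v, 0))^[n] F) (X, 0) :=
    (contDiff_energyDensity hn_wave.contDiff).continuous.comp (by fun_prop)
  have hint : Integrable fun X => energyDensity m b ((dirDeriv (v, 0))^[n] F) (X, 0) :=
    (hψ_int.add hφ_int).mono' hcont.aestronglyMeasurable <| .of_forall fun X => by
      rw [Real.norm_of_nonneg (energyDensity_nonneg hm.le b _ _)]
      exact hbound X
  obtain ⟨hintT, hle⟩ := integral_energyDensity_le hm hn_wave hint T
  refine ⟨hintT, hle.trans ?_⟩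
  calc ∫ X, energyDensity m b ((dirDeriv (v, 0))^[n] F) (X, 0)
      ≤ _ := integral_mono hint (hψ_int.add hφ_int) hbound
    _ = _ := integral_add hψ_int hφ_int
    _ ≤ _ := by
        rw [integral_const_mul, integral_const_mul]
        gcongr <;> exact integral_sq_norm_iteratedFDeriv_le _ hn

end SobolevData

section LineEstimates

variable {E : Type*} [NormedAddCommGroup E] [NormedSpace ℝ E] {f : E → ℝ}

/-- The consistency error `f (X + v) + f (X - v) - 2 f X - ∂ᵥ² f X` of the second difference. -/
def secondDifferenceError (v : E) (f : E → ℝ) (X : E) : ℝ :=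
  f (X + v) + f (X - v) - 2 * f X - (dirDeriv v)^[2] f X

lemma sq_intervalIntegral_zero_one_le {g : ℝ → ℝ} (hg : Continuous g) :
    (∫ t in 0..1, g t) ^ 2 ≤ ∫ t in 0..1, g t ^ 2 := by
  have : IsProbabilityMeasure (volume.restrict (Ioc (0 : ℝ) 1)) := ⟨by simp⟩
  have hint {h : ℝ → ℝ} (hh : Continuous h) : IntegrableOn h (Ioc 0 1) :=
    hh.continuousOn.integrableOn_Icc.mono_set Ioc_subset_Icc_self
  simp only [intervalIntegral.integral_of_le zero_le_one]
  exact even_two.convexOn_pow.map_integral_le (continuous_pow 2).continuousOn isClosed_univ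
    (.of_forall fun _ => mem_univ _) (hint hg) (hint (hg.pow 2))

lemma map_add_eq_sum_iterate_dirDeriv_add_integral (hf : ContDiff ℝ ∞ f) (X v : E) (n : ℕ) :
    f (X + v) = ∑ k ∈ Finset.range (n + 1), (k.factorial : ℝ)⁻¹ * (dirDeriv v)^[k] f X +
      (n.factorial : ℝ)⁻¹ * ∫ t in 0..1, (1 - t) ^ n * (dirDeriv v)^[n + 1] f (X + t • v) := by
  simp only [iterate_dirDeriv_eq_iteratedFDeriv hf]
  exact map_add_eq_sum_add_integral_iteratedFDeriv fun t _ =>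
    (hf.of_le (by exact_mod_cast le_top)).contDiffAt

lemma continuous_iterate_dirDeriv_line (hf : ContDiff ℝ ∞ f) (X v w : E) (n : ℕ) :
    Continuous fun t : ℝ => (dirDeriv v)^[n] f (X + t • w) :=
  (contDiff_iterate_dirDeriv hf v n).continuous.comp (by fun_prop)

lemma secondDifferenceError_eq_integral (hf : ContDiff ℝ ∞ f) (v X : E) :
    secondDifferenceError v f X =
      ∫ t in 0..1, (1 - t) ^ 3 / 6 *
        ((dirDeriv v)^[4] f (X + t • v) + (dirDeriv v)^[4] f (X + t • -v)) := by
  have hcont (w : E) : IntervalIntegrable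
      (fun t => (1 - t) ^ 3 * (dirDeriv v)^[4] f (X + t • w)) volume 0 1 :=
    ((by fun_prop : Continuous fun t : ℝ => (1 - t) ^ 3).mul
      (continuous_iterate_dirDeriv_line hf X v w 4)).intervalIntegrable 0 1
  have hneg (k : ℕ) : (dirDeriv (-v))^[k] f = (-1 : ℝ) ^ k • (dirDeriv v)^[k] f := by
    rw [← neg_one_smul ℝ v, iterate_dirDeriv_smul_left]
  have htaylor (w : E) : f (X + w) = f X + dirDeriv w f X + 2⁻¹ * (dirDeriv w)^[2] f X +
      6⁻¹ * (dirDeriv w)^[3] f X +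
      6⁻¹ * ∫ t in 0..1, (1 - t) ^ 3 * (dirDeriv w)^[4] f (X + t • w) := by
    simpa [Finset.sum_range_succ, Nat.factorial] using
      map_add_eq_sum_iterate_dirDeriv_add_integral hf X w 3
  have hsplit : (∫ t in 0..1, (1 - t) ^ 3 / 6 *
        ((dirDeriv v)^[4] f (X + t • v) + (dirDeriv v)^[4] f (X + t • -v))) =
      6⁻¹ * (∫ t in 0..1, (1 - t) ^ 3 * (dirDeriv v)^[4] f (X + t • v)) +
        6⁻¹ * ∫ t in 0..1, (1 - t) ^ 3 * (dirDeriv v)^[4] f (X + t • -v) := by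
    rw [← mul_add, ← intervalIntegral.integral_add (hcont v) (hcont (-v)),
      ← intervalIntegral.integral_const_mul]
    congr! 2
    ring
  have hbackward := htaylor (-v)
  rw [← Function.iterate_one (dirDeriv (-v))] at hbackward
  simp only [hneg, Pi.smul_apply, smul_eq_mul, Function.iterate_one,
    show (-1 : ℝ) ^ 4 = 1 by norm_num, one_mul] at hbackward
  rw [secondDifferenceError, sub_eq_add_neg X v, htaylor v, hbackward, hsplit]
  ring

lemma sq_secondDifferenceError_le (hf : ContDiff ℝ ∞ f) (v X : E) :
    secondDifferenceError v f X ^ 2 ≤ (∫ t in 0..1, (dirDeriv v)^[4] f (X + t • v) ^ 2) +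
      ∫ t in 0..1, (dirDeriv v)^[4] f (X - v + t • v) ^ 2 := by
  have hline := continuous_iterate_dirDeriv_line hf X v
  have hreflect : ∫ t in 0..1, (dirDeriv v)^[4] f (X + t • -v) ^ 2 =
      ∫ t in 0..1, (dirDeriv v)^[4] f (X - v + t • v) ^ 2 := by
    have hpoint (t : ℝ) : X + t • -v = X - v + (1 - t) • v := by module
    simp only [hpoint]
    simpa using intervalIntegral.integral_comp_sub_left (a := 0) (b := 1)
      (fun t : ℝ => (dirDeriv v)^[4] f (X - v + t • v) ^ 2) 1
  rw [secondDifferenceError_eq_integral hf, ← hreflect, ← intervalIntegral.integral_add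
    (Continuous.intervalIntegrable (by fun_prop) _ _)
    (Continuous.intervalIntegrable (by fun_prop) _ _)]
  refine (sq_intervalIntegral_zero_one_le (by fun_prop)).trans
    (intervalIntegral.integral_mono_on zero_le_one
      (Continuous.intervalIntegrable (by fun_prop) _ _)
      (Continuous.intervalIntegrable (by fun_prop) _ _) fun t ht => ?_)
  have hweight : ((1 - t) ^ 3 / 6) ^ 2 ≤ 1 / 2 := by
    have : (1 - t) ^ 6 ≤ 1 := pow_le_one₀ (by linarith [ht.2]) (by linarith [ht.1])
    linarith [show ((1 - t) ^ 3 / 6) ^ 2 = (1 - t) ^ 6 / 36 by ring]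
  generalize (dirDeriv v)^[4] f (X + t • v) = a, (dirDeriv v)^[4] f (X + t • -v) = b
  calc ((1 - t) ^ 3 / 6 * (a + b)) ^ 2 = ((1 - t) ^ 3 / 6) ^ 2 * (a + b) ^ 2 := mul_pow ..
    _ ≤ 1 / 2 * (2 * (a ^ 2 + b ^ 2)) := by gcongr; exact add_sq_le
    _ = a ^ 2 + b ^ 2 := by ring

lemma eq_integral_line (hf : ContDiff ℝ ∞ f) (w X : E) :
    f X = ∫ t in 0..1, (f (X + t • w) + (t - 1) * dirDeriv w f (X + t • w)) := by
  have hline (t : ℝ) : HasDerivAt (fun s : ℝ => X + s • w) w t := by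
    simpa using ((hasDerivAt_id t).smul_const w).const_add X
  have hderiv (t : ℝ) : HasDerivAt (fun s : ℝ => (s - 1) * f (X + s • w))
      (f (X + t • w) + (t - 1) * dirDeriv w f (X + t • w)) t := by
    simpa [dirDeriv, Function.comp_def] using ((hasDerivAt_id t).sub_const 1).fun_mul
      ((hf.differentiable (by simp) _).hasFDerivAt.comp_hasDerivAt t (hline t))
  have := contDiff_dirDeriv hf w
  rw [intervalIntegral.integral_eq_sub_of_hasDerivAt (fun t _ => hderiv t)
    (Continuous.intervalIntegrable (by fun_prop) _ _)]
  simp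

lemma sq_le_integral_line (hf : ContDiff ℝ ∞ f) (w X : E) :
    f X ^ 2 ≤ 2 * ∫ t in 0..1, (f (X + t • w) ^ 2 + dirDeriv w f (X + t • w) ^ 2) := by
  have := contDiff_dirDeriv hf w
  rw [eq_integral_line hf w X, ← intervalIntegral.integral_const_mul]
  refine (sq_intervalIntegral_zero_one_le (by fun_prop)).trans
    (intervalIntegral.integral_mono_on zero_le_one
      (Continuous.intervalIntegrable (by fun_prop) _ _)
      (Continuous.intervalIntegrable (by fun_prop) _ _) fun t ht => ?_)
  have hweight : (t - 1) ^ 2 ≤ 1 := by nlinarith [ht.1, ht.2]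
  generalize f (X + t • w) = a, dirDeriv w f (X + t • w) = b
  calc (a + (t - 1) * b) ^ 2 ≤ 2 * (a ^ 2 + ((t - 1) * b) ^ 2) := add_sq_le
    _ ≤ 2 * (a ^ 2 + b ^ 2) := by
        rw [mul_pow]
        gcongr
        exact mul_le_of_le_one_left (sq_nonneg b) hweight

end LineEstimates

section ConsistencyDensity

variable {E : Type*} [NormedAddCommGroup E] [NormedSpace ℝ E] {f : E → ℝ}

/-- The density `|∂ᵥ⁴ f|² + |∂_w ∂ᵥ⁴ f|²`, whose integral controls the sum over the lattice of the
squared consistency errors of the second difference in direction `v`. -/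
def consistencyDensity (v w : E) (f : E → ℝ) (X : E) : ℝ :=
  (dirDeriv v)^[4] f X ^ 2 + dirDeriv w ((dirDeriv v)^[4] f) X ^ 2

lemma consistencyDensity_nonneg (v w : E) (f : E → ℝ) (X : E) : 0 ≤ consistencyDensity v w f X :=
  add_nonneg (sq_nonneg _) (sq_nonneg _)

lemma continuous_consistencyDensity (hf : ContDiff ℝ ∞ f) (v w : E) :
    Continuous (consistencyDensity v w f) := by
  have h := contDiff_iterate_dirDeriv hf v 4
  exact (h.continuous.pow 2).add ((contDiff_dirDeriv h w).continuous.pow 2)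

lemma iterate_dirDeriv_comp_smul (hf : ContDiff ℝ ∞ f) (ε : ℝ) (v : E) (n : ℕ) :
    (dirDeriv v)^[n] (fun X => f (ε • X)) = ε ^ n • fun X => (dirDeriv v)^[n] f (ε • X) := by
  have := iterate_dirDeriv_comp hf (fun X => (hasFDerivAt_id X).const_smul ε) v n
  simpa [iterate_dirDeriv_smul_left, Function.comp_def, Pi.smul_def] using this

lemma consistencyDensity_comp_smul_le (hf : ContDiff ℝ ∞ f) {ε : ℝ} (hε : 0 ≤ ε) (hε1 : ε ≤ 1)
    (v w X : E) :
    consistencyDensity v w (fun Y => f (ε • Y)) X ≤ ε ^ 8 * consistencyDensity v w f (ε • X) := by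
  have hmixed : dirDeriv w ((dirDeriv v)^[4] fun Y => f (ε • Y)) X =
      ε ^ 5 * dirDeriv w ((dirDeriv v)^[4] f) (ε • X) := by
    have := iterate_dirDeriv_comp_smul (contDiff_iterate_dirDeriv hf v 4) ε w 1
    rw [Function.iterate_one] at this
    rw [iterate_dirDeriv_comp_smul hf, dirDeriv_const_smul, this]
    simp only [Pi.smul_apply, smul_eq_mul]
    ring
  have hpow : ε ^ 10 ≤ ε ^ 8 := pow_le_pow_of_le_one hε hε1 (by norm_num)
  calc _ = ε ^ 8 * (dirDeriv v)^[4] f (ε • X) ^ 2 +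
        ε ^ 10 * dirDeriv w ((dirDeriv v)^[4] f) (ε • X) ^ 2 := by
        rw [consistencyDensity, hmixed, iterate_dirDeriv_comp_smul hf]
        simp only [Pi.smul_apply, smul_eq_mul]
        ring
    _ ≤ ε ^ 8 * consistencyDensity v w f (ε • X) := by
        rw [consistencyDensity, mul_add]
        gcongr

/-- The half-open unit square, a fundamental domain for the translations of `ℝ²` by `ℤ²`. -/
def unitSquare : Set (ℝ × ℝ) := Ioc 0 1 ×ˢ Ioc 0 1

lemma intervalIntegral_intervalIntegral_eq_setIntegral_unitSquare {G : ℝ → ℝ → ℝ}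
    (hG : Continuous fun p : ℝ × ℝ => G p.1 p.2) :
    ∫ s in 0..1, ∫ t in 0..1, G s t = ∫ p in unitSquare, G p.1 p.2 := by
  simp only [intervalIntegral.integral_of_le zero_le_one]
  refine (setIntegral_prod (fun p : ℝ × ℝ => G p.1 p.2) ?_).symm
  exact (hG.continuousOn.integrableOn_compact (isCompact_Icc.prod isCompact_Icc)).mono_set
    (prod_mono Ioc_subset_Icc_self Ioc_subset_Icc_self)

lemma intervalIntegral_sq_iterate_dirDeriv_le (hf : ContDiff ℝ ∞ f) (v w X : E) :
    ∫ s in 0..1, (dirDeriv v)^[4] f (X + s • v) ^ 2 ≤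
      2 * ∫ p in unitSquare, consistencyDensity v w f (X + (p.1 • v + p.2 • w)) := by
  have hcont := continuous_consistencyDensity hf v w
  have hinner : Continuous fun s : ℝ =>
      ∫ t in 0..1, consistencyDensity v w f (X + (s • v + t • w)) :=
    intervalIntegral.continuous_parametric_intervalIntegral_of_continuous' (by fun_prop) 0 1
  have hfubini := intervalIntegral_intervalIntegral_eq_setIntegral_unitSquare
    (G := fun s t => consistencyDensity v w f (X + (s • v + t • w))) (by fun_prop)
  rw [← hfubini, ← intervalIntegral.integral_const_mul]
  refine intervalIntegral.integral_mono_on zero_le_one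
    (((continuous_iterate_dirDeriv_line hf X v v 4).pow 2).intervalIntegrable _ _)
    ((continuous_const.mul hinner).intervalIntegrable _ _) fun s _ => ?_
  simpa only [consistencyDensity, add_assoc] using
    sq_le_integral_line (contDiff_iterate_dirDeriv hf v 4) w (X + s • v)

lemma sq_secondDifferenceError_le_setIntegral_unitSquare (hf : ContDiff ℝ ∞ f) (v w X : E) :
    secondDifferenceError v f X ^ 2 ≤
      2 * (∫ p in unitSquare, consistencyDensity v w f (X + (p.1 • v + p.2 • w))) +
        2 * ∫ p in unitSquare, consistencyDensity v w f (X - v + (p.1 • v + p.2 • w)) :=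
  (sq_secondDifferenceError_le hf v X).trans
    (add_le_add (intervalIntegral_sq_iterate_dirDeriv_le hf v w X)
      (intervalIntegral_sq_iterate_dirDeriv_le hf v w (X - v)))

end ConsistencyDensity

section LatticeSums

variable {f : ℝ × ℝ → ℝ}

/-- The inclusion `ℤ² → ℝ²`. -/
def latticePoint (j : ℤ × ℤ) : ℝ × ℝ := (j.1, j.2)

lemma latticePoint_add (i j : ℤ × ℤ) :
    latticePoint (i + j) = latticePoint i + latticePoint j := by
  simp [latticePoint]

lemma latticePoint_sub (i j : ℤ × ℤ) :
    latticePoint (i - j) = latticePoint i - latticePoint j := by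
  simp [latticePoint]

lemma hasSum_setIntegral_unitSquare {H : ℝ × ℝ → ℝ} (hH : Integrable H) :
    HasSum (fun j => ∫ q in unitSquare, H (latticePoint j + q)) (∫ X, H X) := by
  let cell (j : ℤ × ℤ) : Set (ℝ × ℝ) := Ioc (j.1 : ℝ) (j.1 + 1) ×ˢ Ioc (j.2 : ℝ) (j.2 + 1)
  have hdisjoint : Pairwise (Function.onFun Disjoint cell) := fun i j hij =>
    disjoint_prod.2 <| (not_and_or.1 (mt Prod.ext_iff.2 hij)).imp
      (fun h => pairwise_disjoint_Ioc_intCast ℝ h) (fun h => pairwise_disjoint_Ioc_intCast ℝ h)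
  have hcover : ⋃ j, cell j = univ := by
    simp only [cell, iUnion_prod (fun m : ℤ => Ioc (m : ℝ) (m + 1)) fun n : ℤ =>
      Ioc (n : ℝ) (n + 1), iUnion_Ioc_intCast, univ_prod_univ]
  have hcell (j : ℤ × ℤ) :
      ∫ q in unitSquare, H (latticePoint j + q) = ∫ X in cell j, H X := by
    have hpreimage : (latticePoint j + ·) ⁻¹' cell j = unitSquare := by
      ext q
      simp [cell, unitSquare, latticePoint]
    rw [← hpreimage]
    exact (measurePreserving_add_left volume _).setIntegral_preimage_emb
      (measurableEmbedding_addLeft _) H _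
  simp only [hcell]
  rw [← setIntegral_univ, ← hcover]
  exact hasSum_integral_iUnion (fun j => measurableSet_Ioc.prod measurableSet_Ioc) hdisjoint
    (hcover ▸ hH.integrableOn)

/-- The hypothesis `hvw` allows `(v, w)` to be the standard basis in either order. -/
lemma tsum_sq_secondDifferenceError_le (hf : ContDiff ℝ ∞ f) {v w : ℝ × ℝ} {a : ℤ × ℤ}
    (ha : latticePoint a = v)
    (hvw : ∀ G : ℝ × ℝ → ℝ, ∫ p in unitSquare, G (p.1 • v + p.2 • w) = ∫ q in unitSquare, G q)
    (hint : Integrable (consistencyDensity v w f)) :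
    Summable (fun j => secondDifferenceError v f (latticePoint j) ^ 2) ∧
      ∑' j, secondDifferenceError v f (latticePoint j) ^ 2 ≤
        4 * ∫ X, consistencyDensity v w f X := by
  have hsum := hasSum_setIntegral_unitSquare hint
  have hsum' := (Equiv.subRight a).hasSum_iff.2 hsum
  have hbound (j : ℤ × ℤ) : secondDifferenceError v f (latticePoint j) ^ 2 ≤
      2 * (∫ q in unitSquare, consistencyDensity v w f (latticePoint j + q)) +
        2 * ∫ q in unitSquare, consistencyDensity v w f (latticePoint (j - a) + q) := by
    rw [latticePoint_sub, ha, ← hvw fun q => consistencyDensity v w f (latticePoint j + q),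
      ← hvw fun q => consistencyDensity v w f (latticePoint j - v + q)]
    exact sq_secondDifferenceError_le_setIntegral_unitSquare hf v w _
  have hmajorant := (hsum.mul_left 2).add (hsum'.mul_left 2)
  have hsummable := Summable.of_nonneg_of_le (fun _ => sq_nonneg _) hbound hmajorant.summable
  exact ⟨hsummable, (hasSum_le hbound hsummable.hasSum hmajorant).trans_eq (by ring)⟩

lemma d2x1_eq_iterate_dirDeriv (hf : ContDiff ℝ ∞ f) (X : ℝ × ℝ) :
    d2x1 f X = (dirDeriv (1, 0))^[2] f X := by
  have := congrFun (iteratedDeriv_slice_left hf 2 X.2) X.1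
  rwa [iteratedDeriv_succ, iteratedDeriv_one] at this

lemma d2x2_eq_iterate_dirDeriv (hf : ContDiff ℝ ∞ f) (X : ℝ × ℝ) :
    d2x2 f X = (dirDeriv (0, 1))^[2] f X := by
  have := congrFun (iteratedDeriv_slice_right hf 2 X.1) X.2
  rwa [iteratedDeriv_succ, iteratedDeriv_one] at this

lemma dLap_sub_cLap_eq_add (hf : ContDiff ℝ ∞ f) (j : ℤ × ℤ) :
    dLap (fun k => f (latticePoint k)) j - cLap f (latticePoint j) =
      secondDifferenceError (1, 0) f (latticePoint j) +
        secondDifferenceError (0, 1) f (latticePoint j) := by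
  have hleft : latticePoint (1, 0) = (1, 0) := by simp [latticePoint]
  have hright : latticePoint (0, 1) = (0, 1) := by simp [latticePoint]
  simp only [dLap, cLap, latticePoint_add, latticePoint_sub, hleft, hright, secondDifferenceError,
    d2x1_eq_iterate_dirDeriv hf, d2x2_eq_iterate_dirDeriv hf]
  ring

lemma tsum_sq_dLap_sub_cLap_latticePoint_le (hf : ContDiff ℝ ∞ f)
    (h₁ : Integrable (consistencyDensity (1, 0) (0, 1) f))
    (h₂ : Integrable (consistencyDensity (0, 1) (1, 0) f)) :
    Summable (fun j => (dLap (fun k => f (latticePoint k)) j - cLap f (latticePoint j)) ^ 2) ∧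
      ∑' j, (dLap (fun k => f (latticePoint k)) j - cLap f (latticePoint j)) ^ 2 ≤
        8 * ((∫ X, consistencyDensity (1, 0) (0, 1) f X) +
          ∫ X, consistencyDensity (0, 1) (1, 0) f X) := by
  have ⟨hsummable₁, hle₁⟩ := tsum_sq_secondDifferenceError_le hf (v := (1, 0)) (w := (0, 1))
    (a := (1, 0)) (by simp [latticePoint]) (by simp) h₁
  have ⟨hsummable₂, hle₂⟩ := tsum_sq_secondDifferenceError_le hf (v := (0, 1)) (w := (1, 0))
    (a := (0, 1)) (by simp [latticePoint])
    (fun G => by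
      simpa [unitSquare] using! setIntegral_prod_swap (Ioc (0 : ℝ) 1) (Ioc (0 : ℝ) 1) G) h₂
  have hmajorant := (hsummable₁.hasSum.add hsummable₂.hasSum).mul_left 2
  have hbound (j : ℤ × ℤ) :
      (dLap (fun k => f (latticePoint k)) j - cLap f (latticePoint j)) ^ 2 ≤
        2 * (secondDifferenceError (1, 0) f (latticePoint j) ^ 2 +
          secondDifferenceError (0, 1) f (latticePoint j) ^ 2) := by
    rw [dLap_sub_cLap_eq_add hf]
    exact add_sq_le
  have hsummable := Summable.of_nonneg_of_le (fun _ => sq_nonneg _) hbound hmajorant.summable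
  exact ⟨hsummable, (hasSum_le hbound hsummable.hasSum hmajorant).trans (by linarith)⟩

lemma integral_consistencyDensity_comp_smul_le (hf : ContDiff ℝ ∞ f) {v w : ℝ × ℝ}
    (hint : Integrable (consistencyDensity v w f)) {ε : ℝ} (hε : 0 < ε) (hε1 : ε ≤ 1) :
    Integrable (consistencyDensity v w fun Y => f (ε • Y)) ∧
      ∫ X, consistencyDensity v w (fun Y => f (ε • Y)) X ≤
        ε ^ 6 * ∫ X, consistencyDensity v w f X := by
  have hle := consistencyDensity_comp_smul_le hf hε.le hε1 v w
  have hmajorant : Integrable fun X => ε ^ 8 * consistencyDensity v w f (ε • X) :=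
    (hint.comp_smul hε.ne').const_mul _
  have hintegrable : Integrable (consistencyDensity v w fun Y => f (ε • Y)) :=
    hmajorant.mono' (continuous_consistencyDensity (by fun_prop) v w).aestronglyMeasurable
      (.of_forall fun X => by rw [Real.norm_of_nonneg (consistencyDensity_nonneg ..)]; exact hle X)
  refine ⟨hintegrable, (integral_mono hintegrable hmajorant hle).trans_eq ?_⟩
  rw [integral_const_mul, Measure.integral_comp_smul_of_nonneg _ _ _ (hR := hε.le)]
  simp only [Module.finrank_prod, Module.finrank_self, smul_eq_mul]
  field_simp

theorem tsum_sq_dLap_sub_cLap_le (hf : ContDiff ℝ ∞ f)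
    (h₁ : Integrable (consistencyDensity (1, 0) (0, 1) f))
    (h₂ : Integrable (consistencyDensity (0, 1) (1, 0) f)) {ε : ℝ} (hε : 0 < ε) (hε1 : ε ≤ 1) :
    Summable (fun j => (dLap (fun k => f (sc ε k)) j - ε ^ 2 * cLap f (sc ε j)) ^ 2) ∧
      ∑' j, (dLap (fun k => f (sc ε k)) j - ε ^ 2 * cLap f (sc ε j)) ^ 2 ≤
        8 * ε ^ 6 * ((∫ X, consistencyDensity (1, 0) (0, 1) f X) +
          ∫ X, consistencyDensity (0, 1) (1, 0) f X) := by
  have hscaled : ContDiff ℝ ∞ fun X => f (ε • X) := by fun_prop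
  have ⟨hint₁, hle₁⟩ := integral_consistencyDensity_comp_smul_le hf h₁ hε hε1
  have ⟨hint₂, hle₂⟩ := integral_consistencyDensity_comp_smul_le hf h₂ hε hε1
  have hcLap (X : ℝ × ℝ) : cLap (fun Y => f (ε • Y)) X = ε ^ 2 * cLap f (ε • X) := by
    simp only [cLap, d2x1_eq_iterate_dirDeriv hscaled, d2x2_eq_iterate_dirDeriv hscaled,
      d2x1_eq_iterate_dirDeriv hf, d2x2_eq_iterate_dirDeriv hf, iterate_dirDeriv_comp_smul hf,
      Pi.smul_apply, smul_eq_mul, mul_add]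
  have ⟨hsummable, hle⟩ := tsum_sq_dLap_sub_cLap_latticePoint_le hscaled hint₁ hint₂
  simp only [hcLap] at hsummable hle
  exact ⟨hsummable, hle.trans (by linarith)⟩

end LatticeSums

section WaveConsistency

variable {m : ℝ} {F : (ℝ × ℝ) × ℝ → ℝ}

lemma consistencyDensity_slice_le {E ι : Type*} [NormedAddCommGroup E] [NormedSpace ℝ E]
    [Fintype ι] {b : ι → E} {F : E × ℝ → ℝ} (hm : 0 ≤ m) (hF : ContDiff ℝ ∞ F) (i j : ι) (T : ℝ)
    (X : E) :
    consistencyDensity (b i) (b j) (fun Y => F (Y, T)) X ≤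
      energyDensity m b ((dirDeriv (b i, 0))^[3] F) (X, T) +
        energyDensity m b ((dirDeriv (b i, 0))^[4] F) (X, T) := by
  have hF₄ := contDiff_iterate_dirDeriv hF (b i, 0) 4
  rw [consistencyDensity, iterate_dirDeriv_slice_left hF,
    dirDeriv_slice_left (hF₄.differentiable (by simp)), Function.iterate_succ_apply']
  exact add_le_add (sq_dirDeriv_le_energyDensity hm b _ _ i)
    (sq_dirDeriv_le_energyDensity hm b _ _ j)

lemma integral_consistencyDensity_slice_le {ι : Type*} [Fintype ι] {b : ι → ℝ × ℝ} (hm : 0 < m)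
    (hb : ∀ i, ‖b i‖ ≤ 1) (h : IsWaveSolution m b F) {k : ℕ} (hk : 4 ≤ k)
    (hφ : MemHk k (fderiv ℝ fun Y => F (Y, 0)))
    (hψ : MemHk k fun Y => dirDeriv (0, 1) F (Y, 0)) (i j : ι) (T : ℝ) :
    Integrable (consistencyDensity (b i) (b j) fun Y => F (Y, T)) ∧
      ∫ X, consistencyDensity (b i) (b j) (fun Y => F (Y, T)) X ≤
        2 * (m * HkNorm k (fun Y => dirDeriv (0, 1) F (Y, 0)) ^ 2 +
          Fintype.card ι * HkNorm k (fderiv ℝ fun Y => F (Y, 0)) ^ 2) := by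
  have hle := consistencyDensity_slice_le (b := b) hm.le h.contDiff i j T
  have ⟨hint₃, hle₃⟩ :=
    integral_energyDensity_iterate_le hm hb h hφ hψ (hb i) (n := 3) (by lia) T
  have ⟨hint₄, hle₄⟩ := integral_energyDensity_iterate_le hm hb h hφ hψ (hb i) hk T
  have hslice : ContDiff ℝ ∞ fun Y => F (Y, T) := h.contDiff.comp (by fun_prop)
  have hint : Integrable (consistencyDensity (b i) (b j) fun Y => F (Y, T)) :=
    (hint₃.add hint₄).mono' (continuous_consistencyDensity hslice _ _).aestronglyMeasurable <|
      .of_forall fun X => by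
        rw [Real.norm_of_nonneg (consistencyDensity_nonneg ..)]
        exact hle X
  refine ⟨hint, (integral_mono hint (hint₃.add hint₄) hle).trans ?_⟩
  rw [integral_add' hint₃ hint₄]
  linarith

theorem tsum_sq_dLap_sub_cLap_slice_le (hm : 0 < m)
    (h : IsWaveSolution m ![((1, 0) : ℝ × ℝ), (0, 1)] F) {k : ℕ} (hk : 4 ≤ k)
    (hφ : MemHk k (fderiv ℝ fun Y => F (Y, 0)))
    (hψ : MemHk k fun Y => dirDeriv (0, 1) F (Y, 0)) {ε : ℝ} (hε : 0 < ε) (hε1 : ε ≤ 1) (T : ℝ) :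
    Summable (fun j =>
        (dLap (fun k => F (sc ε k, T)) j - ε ^ 2 * cLap (fun Y => F (Y, T)) (sc ε j)) ^ 2) ∧
      ∑' j, (dLap (fun k => F (sc ε k, T)) j - ε ^ 2 * cLap (fun Y => F (Y, T)) (sc ε j)) ^ 2 ≤
        32 * ε ^ 6 * (m * HkNorm k (fun Y => dirDeriv (0, 1) F (Y, 0)) ^ 2 +
          2 * HkNorm k (fderiv ℝ fun Y => F (Y, 0)) ^ 2) := by
  have hb (i : Fin 2) : ‖(![(1, 0), (0, 1)] : Fin 2 → ℝ × ℝ) i‖ ≤ 1 := by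
    fin_cases i <;> simp [Prod.norm_def]
  have ⟨hint₁, hle₁⟩ := integral_consistencyDensity_slice_le hm hb h hk hφ hψ 0 1 T
  have ⟨hint₂, hle₂⟩ := integral_consistencyDensity_slice_le hm hb h hk hφ hψ 1 0 T
  simp only [Matrix.cons_val_zero, Matrix.cons_val_one, Fintype.card_fin, Nat.cast_ofNat]
    at hint₁ hle₁ hint₂ hle₂
  have hslice : ContDiff ℝ ∞ fun Y => F (Y, T) := h.contDiff.comp (by fun_prop)
  have ⟨hsummable, hle⟩ := tsum_sq_dLap_sub_cLap_le hslice hint₁ hint₂ hε hε1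
  refine ⟨hsummable, hle.trans ?_⟩
  rw [show (32 : ℝ) * ε ^ 6 = 8 * ε ^ 6 * 4 by ring, mul_assoc _ (4 : ℝ)]
  gcongr
  linarith

lemma isWaveSolution_of_cLap {U : ℝ × ℝ → ℝ → ℝ}
    (hU : ContDiff ℝ ∞ fun p : (ℝ × ℝ) × ℝ => U p.1 p.2)
    (hwave : ∀ X τ, m * deriv (deriv (U X)) τ = cLap (fun Y => U Y τ) X) :
    IsWaveSolution m ![((1, 0) : ℝ × ℝ), (0, 1)] fun p => U p.1 p.2 where
  contDiff := hU
  wave_eq := fun (X, τ) => by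
    have hslice : ContDiff ℝ ∞ fun Y => U Y τ := hU.comp (by fun_prop : ContDiff ℝ ∞ (·, τ))
    have htime := congrFun (iteratedDeriv_slice_right hU 2 X) τ
    rw [iteratedDeriv_succ, iteratedDeriv_one] at htime
    have hspace (v : ℝ × ℝ) := congrFun (iterate_dirDeriv_slice_left hU v 2 τ) X
    have := hwave X τ
    rw [cLap, d2x1_eq_iterate_dirDeriv hslice, d2x2_eq_iterate_dirDeriv hslice, hspace, hspace,
      htime] at this
    simpa using! this

end WaveConsistency

theorem stmt5_general (mbar : ℝ) (hmbar : 0 < mbar) :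
    ∃ C : ℝ, ∀ (U : ℝ × ℝ → ℝ → ℝ) (φ ψ : ℝ × ℝ → ℝ),
      ContDiff ℝ ∞ (fun p : (ℝ × ℝ) × ℝ => U p.1 p.2) →
      (∀ X τ, mbar * deriv (deriv (U X)) τ = cLap (fun Y => U Y τ) X) →
      (∀ X, U X 0 = φ X) → (∀ X, deriv (U X) 0 = ψ X) →
      ∀ k, 4 ≤ k → MemHk k (fderiv ℝ φ) → MemHk k ψ →
      ∀ ε : ℝ, 0 < ε → ε ≤ 1 → ∀ t : ℝ,
        Summable (fun j : ℤ × ℤ =>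
            (dLap (fun k => U (sc ε k) (ε * t)) j -
              ε ^ 2 * cLap (fun Y => U Y (ε * t)) (sc ε j)) ^ 2) ∧
        Real.sqrt (∑' j : ℤ × ℤ,
            (dLap (fun k => U (sc ε k) (ε * t)) j -
              ε ^ 2 * cLap (fun Y => U Y (ε * t)) (sc ε j)) ^ 2) ≤
          4 * C * ε ^ 3 * (HkNorm k (fderiv ℝ φ) + HkNorm k ψ) := by
  refine ⟨√(2 * (mbar + 2)), fun U φ ψ hU hwave h0 h1 k hk hφ hψ ε hε hε1 t => ?_⟩
  obtain rfl : (fun Y => U Y 0) = φ := funext h0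
  obtain rfl : (fun Y => dirDeriv (0, 1) (fun p : (ℝ × ℝ) × ℝ => U p.1 p.2) (Y, 0)) = ψ :=
    funext fun Y => (hasDerivAt_slice_right hU Y 0).deriv.symm.trans (h1 Y)
  have ⟨hsummable, hle⟩ := tsum_sq_dLap_sub_cLap_slice_le hmbar (isWaveSolution_of_cLap hU hwave)
    hk hφ hψ hε hε1 (ε * t)
  have hconst {a b : ℝ} (ha : 0 ≤ a) (hb : 0 ≤ b) :
      32 * ε ^ 6 * (mbar * b ^ 2 + 2 * a ^ 2) ≤ (4 * √(2 * (mbar + 2)) * ε ^ 3 * (a + b)) ^ 2 := by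
    calc _ ≤ 32 * ε ^ 6 * ((mbar + 2) * (a + b) ^ 2) := by
          rw [add_mul]; gcongr <;> linarith
      _ = _ := by rw [mul_pow, mul_pow, mul_pow, Real.sq_sqrt (by positivity)]; ring
  have hφ0 := hkNorm_nonneg k (fderiv ℝ fun Y => U Y 0)
  have hψ0 := hkNorm_nonneg k fun Y => dirDeriv (0, 1) (fun p : (ℝ × ℝ) × ℝ => U p.1 p.2) (Y, 0)
  exact ⟨hsummable, Real.sqrt_le_iff.2 ⟨by positivity, hle.trans (hconst hφ0 hψ0)⟩⟩

theorem stmt5 (mbar : ℝ) (hmbar : 0 < mbar) :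
    ∃ C : ℝ, ∀ (U : ℝ × ℝ → ℝ → ℝ) (φ ψ : ℝ × ℝ → ℝ),
      ContDiff ℝ (⊤ : ℕ∞) (fun p : (ℝ × ℝ) × ℝ => U p.1 p.2) →
      (∀ X τ, mbar * deriv (deriv (U X)) τ = cLap (fun Y => U Y τ) X) →
      (∀ X, U X 0 = φ X) → (∀ X, deriv (U X) 0 = ψ X) →
      ContDiff ℝ (⊤ : ℕ∞) φ → HasCompactSupport φ →
      ContDiff ℝ (⊤ : ℕ∞) ψ → HasCompactSupport ψ →
      ∀ ε : ℝ, 0 < ε → ε ≤ 1 → ∀ t : ℝ,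
        Real.sqrt (∑' j : ℤ × ℤ,
            (dLap (fun k => U (sc ε k) (ε * t)) j -
              ε ^ 2 * cLap (fun Y => U Y (ε * t)) (sc ε j)) ^ 2) ≤
          4 * C * ε ^ 3 * (HkNorm 5 (fderiv ℝ φ) + HkNorm 5 ψ) := by
  obtain ⟨C, hC⟩ := stmt5_general mbar hmbar
  exact ⟨C, fun U φ ψ hU hwave h0 h1 hφ hφc hψ hψc ε hε hε1 t =>
    (hC U φ ψ hU hwave h0 h1 5 (by norm_num)
      (memHk_of_hasCompactSupport (hφ.fderiv_right le_rfl) (hφc.fderiv ℝ) 5)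
      (memHk_of_hasCompactSupport hψ hψc 5) ε hε hε1 t).2⟩

end
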